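/- There is a uniform constant C such that for all scalar u, v ∈ C₀^∞(ℝ×ℝ³) and all t ≥ 0: ‖⟨t+r⟩ u(t,·) v(t,·)‖_{L²(ℝ³)} ≤ C‖u(t,·)‖_{L²(ℝ³)} · ⟨t⟩ ‖v(t,·)‖_{L^∞(ℝ³)} + C‖u(t,·)‖_{L²(ℝ³)} · Σ_{|α|+|β|≤2} ‖Ω^α ∂_x^β v(t,·)‖_{L²(ℝ³)}, where Ω^α denotes a composition of |α| of the rotation fields and ∂_x^β a composition of |β| spatial derivatives. -/

import Mathlib

open MeasureTheory Real Finset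

noncomputable section

/-- Points of space `ℝ³`. -/
abbrev Sp : Type := Fin 3 → ℝ

/-- Spatial partial derivative `∂_j`. -/
def pd3 (j : Fin 3) (w : Sp → ℝ) : Sp → ℝ := fun x => fderiv ℝ w x (Pi.single j 1)

/-- The three Euclidean rotation fields `Ω_{ij} = x_i∂_j - x_j∂_i`, `1 ≤ i < j ≤ 3`. -/
def Rot3 : Fin 3 → (Sp → ℝ) → Sp → ℝ :=
  ![fun w x => x 0 * pd3 1 w x - x 1 * pd3 0 w x,
    fun w x => x 0 * pd3 2 w x - x 2 * pd3 0 w x,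
    fun w x => x 1 * pd3 2 w x - x 2 * pd3 1 w x]

/-- `Ω^α`: a composition of `m` rotation fields. -/
def Rot3Comp : ∀ {m : ℕ}, (Fin m → Fin 3) → (Sp → ℝ) → Sp → ℝ
  | 0, _, w => w
  | _ + 1, α, w => Rot3 (α 0) (Rot3Comp (fun i => α i.succ) w)

/-- `∂_x^β`: a composition of `m` spatial derivatives. -/
def Pd3Comp : ∀ {m : ℕ}, (Fin m → Fin 3) → (Sp → ℝ) → Sp → ℝ
  | 0, _, w => w
  | _ + 1, β, w => pd3 (β 0) (Pd3Comp (fun i => β i.succ) w)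

/-- Euclidean length `r = |x|` of a spatial point. -/
def rad (x : Sp) : ℝ := Real.sqrt (∑ i, (x i) ^ 2)

/-- Japanese bracket `⟨z⟩ = (1+z²)^{1/2}`. -/
def jb (z : ℝ) : ℝ := Real.sqrt (1 + z ^ 2)

/-- Points of space-time `ℝ×ℝ³`. -/
abbrev Pt : Type := Fin 4 → ℝ

/-!
At a point of radius `R ≥ 1` the estimate needs `R |w| ≤ C ∑ ‖Ω^α ∂^β w‖₂`. The map
`z ↦ (1 + c / |z|) z` with `c = R - 1` sends the unit shell `1/2 ≤ |z| ≤ 2` to a shell of unit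
thickness around the sphere of radius `R`. In these coordinates the derivative of `w` is a
combination of the fields `∂_j` and `Ω_{ij}` whose coefficients do not depend on `c`, so the local
embedding `H² ⊂ L^∞` on a ball in the unit shell applies uniformly in `R`, and the Jacobian, of
size `R²`, produces the factor `R`. The local embedding comes from averaging Taylor's formula over a
ball, and the fields of mixed type `∂ Ω` are reduced to `Ω ∂` by commutation.
-/

section Taylor

open scoped ENNReal
open Metric

variable {E F : Type*} [NormedAddCommGroup E] [NormedSpace ℝ E]
  [NormedAddCommGroup F] [NormedSpace ℝ F]

lemma eq_sub_add_integral_smul_second_deriv [CompleteSpace F] {g g' g'' : ℝ → F}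
    (hg : ∀ s ∈ Set.Icc (0 : ℝ) 1, HasDerivAt g (g' s) s)
    (hg' : ∀ s ∈ Set.Icc (0 : ℝ) 1, HasDerivAt g' (g'' s) s)
    (hg'' : ContinuousOn g'' (Set.Icc 0 1)) :
    g 0 = g 1 - g' 1 + ∫ s in (0 : ℝ)..1, s • g'' s := by
  have antideriv : ∀ s ∈ Set.uIcc (0 : ℝ) 1,
      HasDerivAt (fun s => s • g' s - g s) (s • g'' s) s := by
    intro s hs
    rw [Set.uIcc_of_le zero_le_one] at hs
    simpa using ((hasDerivAt_id' s).fun_smul (hg' s hs)).fun_sub (hg s hs)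
  have integrable : IntervalIntegrable (fun s => s • g'' s) volume 0 1 :=
    (continuousOn_id.smul hg'').intervalIntegrable_of_Icc zero_le_one
  rw [intervalIntegral.integral_eq_sub_of_hasDerivAt antideriv integrable, one_smul, zero_smul]
  abel

lemma enorm_le_add_lintegral_enorm_second_fderiv [CompleteSpace F] {f : E → F} {x y : E}
    (hf : ∀ s ∈ Set.Icc (0 : ℝ) 1, ContDiffAt ℝ 2 f (x + s • y)) :
    ‖f x‖ₑ ≤ ‖f (x + y)‖ₑ + ‖fderiv ℝ f (x + y)‖ₑ * ‖y‖ₑ +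
      (∫⁻ s in Set.Ioc (0 : ℝ) 1, ENNReal.ofReal s * ‖fderiv ℝ (fderiv ℝ f) (x + s • y)‖ₑ) *
        ‖y‖ₑ ^ 2 := by
  have line (s : ℝ) : HasDerivAt (fun s : ℝ => x + s • y) y s := by
    simpa using ((hasDerivAt_id s).smul_const y).const_add x
  have hf' (s : ℝ) (hs : s ∈ Set.Icc (0 : ℝ) 1) : ContDiffAt ℝ 1 (fderiv ℝ f) (x + s • y) :=
    (hf s hs).fderiv_right (by norm_num [one_add_one_eq_two])
  have hf'' (s : ℝ) (hs : s ∈ Set.Icc (0 : ℝ) 1) :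
      ContinuousAt (fderiv ℝ (fderiv ℝ f)) (x + s • y) :=
    ((hf' s hs).fderiv_right (m := 0) (by norm_num)).continuousAt
  have deriv_line (s : ℝ) (hs : s ∈ Set.Icc (0 : ℝ) 1) :
      HasDerivAt (fun s : ℝ => fderiv ℝ f (x + s • y) y)
        (fderiv ℝ (fderiv ℝ f) (x + s • y) y y) s := by
    have outer := ((hf' s hs).differentiableAt one_ne_zero).hasFDerivAt.comp_hasDerivAt s (line s)
    exact (ContinuousLinearMap.apply ℝ F y).hasFDerivAt.comp_hasDerivAt s outer
  have continuousOn_line : ContinuousOn (fun s : ℝ => fderiv ℝ (fderiv ℝ f) (x + s • y) y y)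
      (Set.Icc 0 1) := fun s hs => by
    have := ContinuousAt.comp (f := fun s : ℝ => x + s • y) (hf'' s hs) (line s).continuousAt
    exact ((this.clm_apply continuousAt_const).clm_apply continuousAt_const).continuousWithinAt
  have taylor := eq_sub_add_integral_smul_second_deriv (g := fun s => f (x + s • y))
    (fun s hs => ((hf s hs).differentiableAt two_ne_zero).hasFDerivAt.comp_hasDerivAt s (line s))
    deriv_line continuousOn_line
  have remainder : ‖∫ s in (0 : ℝ)..1, s • fderiv ℝ (fderiv ℝ f) (x + s • y) y y‖ₑ ≤
      (∫⁻ s in Set.Ioc (0 : ℝ) 1, ENNReal.ofReal s * ‖fderiv ℝ (fderiv ℝ f) (x + s • y)‖ₑ) *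
        ‖y‖ₑ ^ 2 := by
    rw [intervalIntegral.integral_of_le zero_le_one, ← lintegral_mul_const' _ _ (by simp)]
    refine (enorm_integral_le_lintegral_enorm _).trans
      (setLIntegral_mono' measurableSet_Ioc fun s hs => ?_)
    rw [enorm_smul, Real.enorm_of_nonneg hs.1.le, sq, mul_assoc, ← mul_assoc ‖_‖ₑ]
    gcongr
    exact (ContinuousLinearMap.le_opENorm _ _).trans
      (mul_le_mul_left (ContinuousLinearMap.le_opENorm _ _) _)
  simp only [zero_smul, add_zero, one_smul] at taylor
  rw [taylor]
  refine (enorm_add_le _ _).trans (add_le_add ((enorm_sub_le).trans ?_) remainder)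
  gcongr
  exact ContinuousLinearMap.le_opENorm _ _

lemma mapsTo_dilation_closedBall {x : E} {r s : ℝ} (hs₀ : 0 ≤ s) (hs₁ : s ≤ 1) :
    Set.MapsTo (fun y => x + s • y) (closedBall 0 r) (closedBall x r) := by
  intro y hy
  rw [mem_closedBall_zero_iff] at hy
  rw [mem_closedBall_iff_norm, add_sub_cancel_left, norm_smul, Real.norm_of_nonneg hs₀]
  exact (mul_le_of_le_one_left (norm_nonneg y) hs₁).trans hy

lemma enorm_le_add_lintegral_of_mem_closedBall [CompleteSpace F] {f : E → F} {x y : E} {r : ℝ}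
    (hf : ∀ z ∈ closedBall x r, ContDiffAt ℝ 2 f z) (hy : y ∈ closedBall 0 r) :
    ‖f x‖ₑ ≤ ‖f (x + y)‖ₑ + ‖fderiv ℝ f (x + y)‖ₑ * ENNReal.ofReal r +
      (∫⁻ s in Set.Ioc (0 : ℝ) 1, ENNReal.ofReal s * ‖fderiv ℝ (fderiv ℝ f) (x + s • y)‖ₑ) *
        ENNReal.ofReal r ^ 2 := by
  have enorm_y : ‖y‖ₑ ≤ ENNReal.ofReal r := by
    rw [← ofReal_norm]
    exact ENNReal.ofReal_le_ofReal (mem_closedBall_zero_iff.1 hy)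
  have taylor := enorm_le_add_lintegral_enorm_second_fderiv
    fun s hs => hf _ (mapsTo_dilation_closedBall hs.1 hs.2 hy)
  exact taylor.trans (by gcongr)

end Taylor

section LocalSobolev

open scoped ENNReal NNReal
open Metric Module

variable {E F : Type*} [NormedAddCommGroup E] [NormedSpace ℝ E] [FiniteDimensional ℝ E]
  [MeasurableSpace E] [BorelSpace E] (μ : Measure E) [μ.IsAddHaarMeasure] [NormedAddCommGroup F]

lemma rpow_mul_eLpNorm_comp_le_of_le_abs_det {s : Set E} (hs : MeasurableSet s) {φ : E → E}
    {φ' : E → E →L[ℝ] E} (hφ' : ∀ x ∈ s, HasFDerivWithinAt φ (φ' x) s x)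
    (hφ : Set.InjOn φ s) {δ : ℝ} (hδ : ∀ x ∈ s, δ ≤ |(φ' x).det|) (g : E → F)
    {p : ℝ≥0∞} (hp₀ : p ≠ 0) (hp : p ≠ ∞) :
    ENNReal.ofReal δ ^ (1 / p.toReal) * eLpNorm (g ∘ φ) p (μ.restrict s) ≤
      eLpNorm g p (μ.restrict (φ '' s)) := by
  rw [eLpNorm_eq_lintegral_rpow_enorm_toReal hp₀ hp, eLpNorm_eq_lintegral_rpow_enorm_toReal hp₀ hp,
    ← ENNReal.mul_rpow_of_nonneg _ _ (by positivity),
    ← lintegral_const_mul' _ _ ENNReal.ofReal_ne_top,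
    lintegral_image_eq_lintegral_abs_det_fderiv_mul μ hs hφ' hφ]
  refine ENNReal.rpow_le_rpow (setLIntegral_mono' hs fun x hx => ?_) (by positivity)
  gcongr
  exacts [hδ x hx, le_rfl]

lemma rpow_mul_eLpNorm_comp_dilation_le {x : E} {r s : ℝ} (hs₀ : 0 < s) (hs₁ : s ≤ 1)
    (g : E → F) {p : ℝ≥0∞} (hp₀ : p ≠ 0) (hp : p ≠ ∞) :
    ENNReal.ofReal (s ^ (finrank ℝ E / p.toReal)) *
      eLpNorm (fun y => g (x + s • y)) p (μ.restrict (closedBall 0 r)) ≤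
        eLpNorm g p (μ.restrict (closedBall x r)) := by
  have dilation_deriv (y : E) :
      HasFDerivAt (fun y => x + s • y) (s • ContinuousLinearMap.id ℝ E) y :=
    ((hasFDerivAt_id y).const_smul s).const_add x
  have det_eq : |(s • ContinuousLinearMap.id ℝ E).det| = s ^ finrank ℝ E := by
    simp [ContinuousLinearMap.det, abs_of_pos hs₀]
  have image_bound := rpow_mul_eLpNorm_comp_le_of_le_abs_det μ (s := closedBall 0 r)
    measurableSet_closedBall (fun y _ => (dilation_deriv y).hasFDerivWithinAt)
    (((add_right_injective x).comp (smul_right_injective E hs₀.ne')).injOn)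
    (fun y _ => det_eq.ge) g hp₀ hp
  rw [ENNReal.ofReal_rpow_of_nonneg (by positivity) (by positivity), ← Real.rpow_natCast,
    ← Real.rpow_mul hs₀.le, mul_one_div] at image_bound
  exact image_bound.trans (eLpNorm_mono_measure _ (Measure.restrict_mono
    (mapsTo_dilation_closedBall hs₀.le hs₁).image_subset le_rfl))

lemma setLIntegral_enorm_comp_dilation_le {x : E} {r s : ℝ} (hs₀ : 0 < s) (hs₁ : s ≤ 1)
    {g : E → F} (hg : ContinuousOn g (closedBall x r)) :
    ∫⁻ y in closedBall 0 r, ‖g (x + s • y)‖ₑ ∂μ ≤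
      μ (closedBall 0 r) ^ (1 / 2 : ℝ) * ENNReal.ofReal (s ^ (-(finrank ℝ E / 2 : ℝ))) *
        eLpNorm g 2 (μ.restrict (closedBall x r)) := by
  have scaling := rpow_mul_eLpNorm_comp_dilation_le μ (x := x) (r := r) hs₀ hs₁ g two_ne_zero
    ENNReal.ofNat_ne_top
  have cauchySchwarz := eLpNorm_le_eLpNorm_mul_rpow_measure_univ one_le_two
    ((hg.comp (by fun_prop) (mapsTo_dilation_closedBall hs₀.le hs₁)).aestronglyMeasurable
      (μ := μ) measurableSet_closedBall)
  rw [eLpNorm_one_eq_lintegral_enorm, Measure.restrict_apply_univ, ENNReal.toReal_one,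
    ENNReal.toReal_ofNat, one_div_one, show (1 : ℝ) - 1 / 2 = 1 / 2 by norm_num] at cauchySchwarz
  have cancel : ENNReal.ofReal (s ^ (-(finrank ℝ E / 2 : ℝ))) *
      ENNReal.ofReal (s ^ (finrank ℝ E / 2 : ℝ)) = 1 := by
    rw [← ENNReal.ofReal_mul (by positivity), ← Real.rpow_add hs₀, neg_add_cancel,
      Real.rpow_zero, ENNReal.ofReal_one]
  calc ∫⁻ y in closedBall 0 r, ‖g (x + s • y)‖ₑ ∂μ
      ≤ eLpNorm (fun y => g (x + s • y)) 2 (μ.restrict (closedBall 0 r)) *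
          μ (closedBall 0 r) ^ (1 / 2 : ℝ) := cauchySchwarz
    _ = μ (closedBall 0 r) ^ (1 / 2 : ℝ) * ENNReal.ofReal (s ^ (-(finrank ℝ E / 2 : ℝ))) *
        (ENNReal.ofReal (s ^ (finrank ℝ E / 2 : ℝ)) *
          eLpNorm (fun y => g (x + s • y)) 2 (μ.restrict (closedBall 0 r))) := by
        rw [← mul_assoc, mul_assoc (μ _ ^ _), cancel, mul_one, mul_comm]
    _ ≤ _ := mul_le_mul_right scaling _

/-- The integral `∫₀¹ s · s ^ (-n / 2) ds`, finite exactly when `n < 4`: the factor `s` comes from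
Taylor's remainder and `s ^ (-n / 2)` from dilating an `L²` norm by `s`. -/
def taylorDilationWeight (n : ℕ) : ℝ≥0∞ :=
  ∫⁻ s in Set.Ioc (0 : ℝ) 1, ENNReal.ofReal s * ENNReal.ofReal (s ^ (-(n / 2 : ℝ)))

lemma taylorDilationWeight_ne_top {n : ℕ} (hn : n < 4) : taylorDilationWeight n ≠ ∞ := by
  have exponent : -1 < 1 + -(n / 2 : ℝ) := by
    have : (n : ℝ) ≤ 3 := by exact_mod_cast Nat.le_of_lt_succ hn
    linarith
  have integrable := (intervalIntegral.intervalIntegrable_rpow' (a := 0) (b := 1) exponent).1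
  refine ne_of_lt (lt_of_eq_of_lt (setLIntegral_congr_fun measurableSet_Ioc fun s hs => ?_)
    integrable.2)
  change ENNReal.ofReal s * _ = ‖s ^ (1 + -(n / 2 : ℝ))‖ₑ
  rw [← ENNReal.ofReal_mul hs.1.le, Real.rpow_add hs.1, Real.rpow_one,
    Real.enorm_of_nonneg (mul_nonneg hs.1.le (Real.rpow_nonneg hs.1.le _))]

variable [NormedSpace ℝ F] [CompleteSpace F]

omit [FiniteDimensional ℝ E] in
lemma measurable_ofReal_mul_enorm_second_fderiv_dilation (f : E → F) (x : E) :
    Measurable fun q : E × ℝ =>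
      ENNReal.ofReal q.2 * ‖fderiv ℝ (fderiv ℝ f) (x + q.2 • q.1)‖ₑ :=
  measurable_snd.ennreal_ofReal.mul ((measurable_fderiv ℝ (fderiv ℝ f)).comp (by fun_prop)).enorm

omit [FiniteDimensional ℝ E] in
lemma measurable_lintegral_ofReal_mul_enorm_second_fderiv_dilation (f : E → F) (x : E) :
    Measurable fun y => ∫⁻ s in Set.Ioc (0 : ℝ) 1,
      ENNReal.ofReal s * ‖fderiv ℝ (fderiv ℝ f) (x + s • y)‖ₑ :=
  Measurable.lintegral_prod_right' (f := fun q : E × ℝ =>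
    ENNReal.ofReal q.2 * ‖fderiv ℝ (fderiv ℝ f) (x + q.2 • q.1)‖ₑ)
    (measurable_ofReal_mul_enorm_second_fderiv_dilation f x)

lemma lintegral_lintegral_enorm_second_fderiv_le {f : E → F} {x : E} {r : ℝ}
    (hf : ContinuousOn (fderiv ℝ (fderiv ℝ f)) (closedBall x r)) :
    ∫⁻ y in closedBall 0 r, (∫⁻ s in Set.Ioc (0 : ℝ) 1,
        ENNReal.ofReal s * ‖fderiv ℝ (fderiv ℝ f) (x + s • y)‖ₑ) ∂μ ≤
      μ (closedBall 0 r) ^ (1 / 2 : ℝ) * taylorDilationWeight (finrank ℝ E) *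
        eLpNorm (fderiv ℝ (fderiv ℝ f)) 2 (μ.restrict (closedBall x r)) := by
  have measurable := measurable_ofReal_mul_enorm_second_fderiv_dilation f x
  rw [lintegral_lintegral_swap measurable.aemeasurable, mul_right_comm, taylorDilationWeight,
    ← lintegral_const_mul _ (by fun_prop)]
  refine setLIntegral_mono' measurableSet_Ioc fun s hs => ?_
  rw [lintegral_const_mul' _ _ ENNReal.ofReal_ne_top]
  refine (mul_le_mul_right (setLIntegral_enorm_comp_dilation_le μ
    (g := fderiv ℝ (fderiv ℝ f)) hs.1 hs.2 hf) _).trans_eq ?_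
  ring

lemma measure_closedBall_mul_enorm_le {x : E} {r : ℝ} {f : E → F}
    (hf : ∀ z ∈ closedBall x r, ContDiffAt ℝ 2 f z) :
    μ (closedBall 0 r) * ‖f x‖ₑ ≤ μ (closedBall 0 r) ^ (1 / 2 : ℝ) *
      (eLpNorm f 2 (μ.restrict (closedBall x r)) +
        ENNReal.ofReal r * eLpNorm (fderiv ℝ f) 2 (μ.restrict (closedBall x r)) +
        taylorDilationWeight (finrank ℝ E) * ENNReal.ofReal r ^ 2 *
          eLpNorm (fderiv ℝ (fderiv ℝ f)) 2 (μ.restrict (closedBall x r))) := by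
  set N₀ := eLpNorm f 2 (μ.restrict (closedBall x r))
  set N₁ := eLpNorm (fderiv ℝ f) 2 (μ.restrict (closedBall x r))
  set N₂ := eLpNorm (fderiv ℝ (fderiv ℝ f)) 2 (μ.restrict (closedBall x r))
  have hf' (z) (hz : z ∈ closedBall x r) : ContDiffAt ℝ 1 (fderiv ℝ f) z :=
    (hf z hz).fderiv_right (by norm_num [one_add_one_eq_two])
  have hf'' (z) (hz : z ∈ closedBall x r) : ContDiffAt ℝ 0 (fderiv ℝ (fderiv ℝ f)) z :=
    (hf' z hz).fderiv_right (by norm_num)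
  have mean_f := setLIntegral_enorm_comp_dilation_le μ one_pos le_rfl
    fun z hz => (hf z hz).continuousAt.continuousWithinAt
  have mean_f' := setLIntegral_enorm_comp_dilation_le μ one_pos le_rfl
    fun z hz => (hf' z hz).continuousAt.continuousWithinAt
  have mean_f'' := lintegral_lintegral_enorm_second_fderiv_le μ
    fun z hz => (hf'' z hz).continuousAt.continuousWithinAt
  simp only [one_smul, Real.one_rpow, ENNReal.ofReal_one, mul_one] at mean_f mean_f'
  have measurable_f' : Measurable fun y => ‖fderiv ℝ f (x + y)‖ₑ * ENNReal.ofReal r :=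
    ((measurable_fderiv ℝ f).comp (measurable_const_add x)).enorm.mul_const _
  have measurable_f'' :=
    (measurable_lintegral_ofReal_mul_enorm_second_fderiv_dilation f x).mul_const
      (ENNReal.ofReal r ^ 2)
  calc μ (closedBall 0 r) * ‖f x‖ₑ = ∫⁻ _ in closedBall (0 : E) r, ‖f x‖ₑ ∂μ := by
        rw [setLIntegral_const, mul_comm]
    _ ≤ _ := setLIntegral_mono' measurableSet_closedBall fun _ =>
        enorm_le_add_lintegral_of_mem_closedBall hf
    _ = (∫⁻ y in closedBall (0 : E) r, ‖f (x + y)‖ₑ ∂μ) +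
        (∫⁻ y in closedBall (0 : E) r, ‖fderiv ℝ f (x + y)‖ₑ ∂μ) * ENNReal.ofReal r +
        (∫⁻ y in closedBall (0 : E) r, (∫⁻ s in Set.Ioc (0 : ℝ) 1, ENNReal.ofReal s *
          ‖fderiv ℝ (fderiv ℝ f) (x + s • y)‖ₑ) ∂μ) * ENNReal.ofReal r ^ 2 := by
      rw [lintegral_add_right _ measurable_f'', lintegral_add_right _ measurable_f',
        lintegral_mul_const' _ _ (by finiteness), lintegral_mul_const' _ _ (by finiteness)]
    _ ≤ μ (closedBall 0 r) ^ (1 / 2 : ℝ) * N₀ +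
        μ (closedBall 0 r) ^ (1 / 2 : ℝ) * N₁ * ENNReal.ofReal r +
        μ (closedBall 0 r) ^ (1 / 2 : ℝ) * taylorDilationWeight (finrank ℝ E) * N₂ *
          ENNReal.ofReal r ^ 2 := by gcongr
    _ = _ := by ring

lemma exists_enorm_le_eLpNorm_fderiv (hE : finrank ℝ E < 4) {r : ℝ} (hr : 0 < r) :
    ∃ C : ℝ≥0, ∀ (x : E) (f : E → F), (∀ z ∈ closedBall x r, ContDiffAt ℝ 2 f z) →
      ‖f x‖ₑ ≤ C * (eLpNorm f 2 (μ.restrict (closedBall x r)) +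
        eLpNorm (fderiv ℝ f) 2 (μ.restrict (closedBall x r)) +
        eLpNorm (fderiv ℝ (fderiv ℝ f)) 2 (μ.restrict (closedBall x r))) := by
  set V := μ (closedBall (0 : E) r)
  have V_ne_zero : V ≠ 0 := (measure_closedBall_pos μ 0 hr).ne'
  have V_ne_top : V ≠ ∞ := measure_closedBall_lt_top.ne
  set J := taylorDilationWeight (finrank ℝ E)
  have J_ne_top : J ≠ ∞ := taylorDilationWeight_ne_top hE
  set K : ℝ≥0∞ := 1 + ENNReal.ofReal r + J * ENNReal.ofReal r ^ 2
  have C_ne_top : V⁻¹ * (V ^ (1 / 2 : ℝ) * K) ≠ ∞ := by finiteness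
  refine ⟨(V⁻¹ * (V ^ (1 / 2 : ℝ) * K)).toNNReal, fun x f hf => ?_⟩
  rw [ENNReal.coe_toNNReal C_ne_top, mul_assoc, ← ENNReal.mul_le_iff_le_inv V_ne_zero V_ne_top,
    mul_assoc]
  refine (measure_closedBall_mul_enorm_le μ hf).trans (mul_le_mul_right ?_ _)
  rw [mul_add, mul_add]
  refine add_le_add (add_le_add (le_mul_of_one_le_left' ?_) (mul_le_mul_left ?_ _))
    (mul_le_mul_left le_add_self _)
  exacts [le_self_add.trans le_self_add, le_add_self.trans le_self_add]

end LocalSobolev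

section RadialShift

open scoped ENNReal
open Metric

lemma rad_eq_norm (x : Sp) : rad x = ‖WithLp.toLp 2 x‖ := by
  simp [rad, EuclideanSpace.norm_eq]

lemma rad_nonneg (x : Sp) : 0 ≤ rad x := Real.sqrt_nonneg _

lemma rad_sq (x : Sp) : rad x ^ 2 = x 0 ^ 2 + x 1 ^ 2 + x 2 ^ 2 := by
  rw [rad, Real.sq_sqrt (by positivity), Fin.sum_univ_three]

lemma rad_smul (a : ℝ) (x : Sp) : rad (a • x) = |a| * rad x := by
  rw [rad_eq_norm, rad_eq_norm, WithLp.toLp_smul, norm_smul, Real.norm_eq_abs]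

lemma abs_rad_sub_rad_le (x y : Sp) : |rad x - rad y| ≤ rad (x - y) := by
  simpa only [rad_eq_norm, WithLp.toLp_sub] using
    abs_norm_sub_norm_le (WithLp.toLp 2 x) (WithLp.toLp 2 y)

lemma rad_le_two_mul_norm (x : Sp) : rad x ≤ 2 * ‖x‖ := by
  refine abs_le_of_sq_le_sq' ?_ (by positivity) |>.2
  have sq_le (i : Fin 3) : x i ^ 2 ≤ ‖x‖ ^ 2 := sq_le_sq.2 (by simpa using norm_le_pi_norm x i)
  rw [rad_sq]
  nlinarith [sq_le 0, sq_le 1, sq_le 2, sq_nonneg ‖x‖]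

lemma continuous_rad : Continuous rad := by
  unfold rad
  fun_prop

/-- The Euclidean pairing `y ↦ z · y`, as a covector. -/
def dotForm (z : Sp) : Sp →L[ℝ] ℝ := ∑ j, z j • ContinuousLinearMap.proj j

lemma dotForm_apply (z y : Sp) : dotForm z y = z 0 * y 0 + z 1 * y 1 + z 2 * y 2 := by
  simp [dotForm, Fin.sum_univ_three]

lemma hasFDerivAt_rad {z : Sp} (hz : 0 < rad z) : HasFDerivAt rad ((rad z)⁻¹ • dotForm z) z := by
  have coord (i : Fin 3) := (ContinuousLinearMap.proj (R := ℝ) (φ := fun _ : Fin 3 => ℝ)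
    i).hasFDerivAt (x := z)
  have sum_sq := HasFDerivAt.fun_sum (u := univ) fun i _ => (coord i).pow 2
  refine (sum_sq.sqrt (Real.sqrt_pos.1 hz).ne').congr_fderiv ?_
  ext y
  simp only [rad, dotForm_apply, Fin.sum_univ_three, ContinuousLinearMap.proj_apply, one_div,
    mul_inv_rev, Nat.add_one_sub_one, pow_one, nsmul_eq_mul, Nat.cast_ofNat, smul_add, add_apply,
    smul_apply, smul_eq_mul]
  ring

/-- The map `z ↦ (1 + c / |z|) z` pushing space outwards by the distance `c` along rays. -/
def radialShift (c : ℝ) (z : Sp) : Sp := (1 + c / rad z) • z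

/-- The derivative of `radialShift c` at `z`. -/
def radialShiftDeriv (c : ℝ) (z : Sp) : Sp →L[ℝ] Sp :=
  (1 + c / rad z) • ContinuousLinearMap.id ℝ Sp - (c / rad z ^ 3) • (dotForm z).smulRight z

lemma hasFDerivAt_radialShift (c : ℝ) {z : Sp} (hz : 0 < rad z) :
    HasFDerivAt (radialShift c) (radialShiftDeriv c z) z := by
  have factor := (((hasDerivAt_inv hz.ne').comp_hasFDerivAt z (hasFDerivAt_rad hz)).const_mul
    c).const_add 1
  refine (factor.smul (hasFDerivAt_id z)).congr_fderiv ?_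
  ext y i
  simp only [radialShiftDeriv, Function.comp_apply, neg_smul, smul_neg, id_eq, add_apply,
    sub_apply, neg_apply, smul_apply, ContinuousLinearMap.id_apply,
    ContinuousLinearMap.smulRight_apply, smul_eq_mul, Pi.add_apply, Pi.sub_apply, Pi.neg_apply,
    Pi.smul_apply]
  field_simp
  ring

lemma det_radialShiftDeriv (c : ℝ) {z : Sp} (hz : 0 < rad z) :
    (radialShiftDeriv c z).det = (1 + c / rad z) ^ 2 := by
  rw [ContinuousLinearMap.det, ← LinearMap.det_toMatrix', Matrix.det_fin_three]
  simp only [radialShiftDeriv, LinearMap.toMatrix'_apply, ContinuousLinearMap.coe_coe, sub_apply,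
    smul_apply, ContinuousLinearMap.id_apply, ContinuousLinearMap.smulRight_apply, dotForm_apply,
    Pi.sub_apply, Pi.smul_apply, smul_eq_mul, Pi.single_apply, Fin.reduceEq, if_true, if_false,
    mul_one, mul_zero, add_zero, zero_add, zero_sub]
  field_simp
  linear_combination (c * (rad z + c) ^ 2 * rad z ^ 4) * rad_sq z

lemma rad_radialShift {c : ℝ} (hc : 0 ≤ c) {z : Sp} (hz : 0 < rad z) :
    rad (radialShift c z) = rad z + c := by
  rw [radialShift, rad_smul, abs_of_nonneg (by positivity)]
  field_simp

lemma injOn_radialShift {c : ℝ} (hc : 0 ≤ c) : Set.InjOn (radialShift c) {z | 0 < rad z} := by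
  intro y hy z hz h
  have rad_eq : rad y = rad z := by
    simpa only [rad_radialShift hc hy, rad_radialShift hc hz, add_left_inj] using congrArg rad h
  have factor_ne_zero : 1 + c / rad z ≠ 0 := by have : 0 < rad z := hz; positivity
  rw [radialShift, radialShift, rad_eq] at h
  exact smul_right_injective Sp factor_ne_zero h

/-- A compact shell around the unit sphere; `radialShift (R - 1)` maps it to a shell of comparable
thickness around the sphere of radius `R`. -/
def unitShell : Set Sp := {z | rad z ∈ Set.Icc (1 / 2) 2}

lemma rad_pos_of_mem_unitShell {z : Sp} (hz : z ∈ unitShell) : 0 < rad z :=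
  one_half_pos.trans_le hz.1

lemma isCompact_unitShell : IsCompact unitShell := by
  refine isCompact_of_isClosed_isBounded (isClosed_Icc.preimage continuous_rad)
    (isBounded_iff_forall_norm_le.2 ⟨2, fun z hz => ?_⟩)
  refine (pi_norm_le_iff_of_nonneg zero_le_two).2 fun i => le_trans ?_ hz.2
  exact (PiLp.norm_apply_le (WithLp.toLp 2 z) i).trans_eq (rad_eq_norm z).symm

lemma closedBall_subset_unitShell {e : Sp} (he : rad e = 1) : closedBall e (1 / 4) ⊆ unitShell := by
  intro z hz
  have dist_le := (abs_rad_sub_rad_le z e).trans (rad_le_two_mul_norm (z - e))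
  rw [abs_le, he] at dist_le
  rw [mem_closedBall_iff_norm] at hz
  constructor <;> linarith

lemma ofReal_mul_eLpNorm_comp_radialShift_le {c : ℝ} (hc : 0 ≤ c) (g : Sp → ℝ) :
    ENNReal.ofReal ((1 + c) / 2) * eLpNorm (g ∘ radialShift c) 2 (volume.restrict unitShell) ≤
      eLpNorm g 2 := by
  have det_ge (z) (hz : z ∈ unitShell) : ((1 + c) / 2) ^ 2 ≤ |(radialShiftDeriv c z).det| := by
    have hz₀ := rad_pos_of_mem_unitShell hz
    rw [det_radialShiftDeriv c hz₀, abs_sq]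
    gcongr
    have : c / 2 ≤ c / rad z := div_le_div_of_nonneg_left hc hz₀ hz.2
    linarith
  have := rpow_mul_eLpNorm_comp_le_of_le_abs_det volume isCompact_unitShell.measurableSet
    (fun z hz => (hasFDerivAt_radialShift c (rad_pos_of_mem_unitShell hz)).hasFDerivWithinAt)
    ((injOn_radialShift hc).mono fun z => rad_pos_of_mem_unitShell) det_ge g two_ne_zero
    ENNReal.ofNat_ne_top
  rw [ENNReal.ofReal_pow (by positivity), ← ENNReal.rpow_natCast, ← ENNReal.rpow_mul] at this
  simpa using this.trans (eLpNorm_mono_measure _ Measure.restrict_le_self)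

end RadialShift

section RotationFrame

open scoped ENNReal NNReal
open Metric

/-- The indices `(i, j)` of the `k`-th rotation field `Rot3 k = x_i ∂_j - x_j ∂_i`. -/
def rotPair : Fin 3 → Fin 3 × Fin 3 := ![(0, 1), (0, 2), (1, 2)]

lemma rot3_apply (k : Fin 3) (w : Sp → ℝ) (x : Sp) :
    Rot3 k w x = x (rotPair k).1 * pd3 (rotPair k).2 w x -
      x (rotPair k).2 * pd3 (rotPair k).1 w x := by
  fin_cases k <;> rfl

lemma fderiv_apply_eq_sum_pd3 (w : Sp → ℝ) (x y : Sp) :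
    fderiv ℝ w x y = ∑ k, y k * pd3 k w x := by
  conv_lhs => rw [pi_eq_sum_univ' y, map_sum]
  simp [pd3]

/-- The vector fields `∂_1, ∂_2, ∂_3, Ω_{12}, Ω_{13}, Ω_{23}`. -/
def frameField : Fin 3 ⊕ Fin 3 → (Sp → ℝ) → Sp → ℝ := Sum.elim pd3 Rot3

/-- Covectors expressing the derivative of a radially shifted function through `frameField`: the
translations carry the radial part of the derivative, the rotations its angular part. -/
def coframe : Fin 3 ⊕ Fin 3 → Sp → Sp →L[ℝ] ℝ :=
  Sum.elim (fun k z => (z k / rad z ^ 2) • dotForm z) fun k z =>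
    (rad z ^ 2)⁻¹ • (z (rotPair k).1 • ContinuousLinearMap.proj (rotPair k).2 -
      z (rotPair k).2 • ContinuousLinearMap.proj (rotPair k).1)

/-- The point of the coframe is that its coefficients do not depend on the shift `c`. -/
lemma hasFDerivAt_comp_radialShift (c : ℝ) {z : Sp} (hz : 0 < rad z) {w : Sp → ℝ}
    (hw : DifferentiableAt ℝ w (radialShift c z)) :
    HasFDerivAt (w ∘ radialShift c)
      (∑ κ, frameField κ w (radialShift c z) • coframe κ z) z := by
  refine (hw.hasFDerivAt.comp z (hasFDerivAt_radialShift c hz)).congr_fderiv ?_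
  ext y
  simp only [radialShiftDeriv, ContinuousLinearMap.comp_apply, fderiv_apply_eq_sum_pd3,
    Fintype.sum_sum_type, Fin.sum_univ_three, frameField, coframe, rotPair, rot3_apply,
    Sum.elim_inl, Sum.elim_inr, Matrix.cons_val_zero, Matrix.cons_val_one, Matrix.cons_val,
    dotForm_apply, add_apply, sub_apply, smul_apply, ContinuousLinearMap.proj_apply,
    ContinuousLinearMap.id_apply, ContinuousLinearMap.smulRight_apply, Pi.sub_apply,
    Pi.smul_apply, smul_eq_mul]
  generalize pd3 0 w (radialShift c z) = d₀, pd3 1 w (radialShift c z) = d₁,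
    pd3 2 w (radialShift c z) = d₂
  simp only [radialShift, Pi.smul_apply, smul_eq_mul]
  field_simp
  linear_combination (rad z + c) * (y 0 * d₀ + y 1 * d₁ + y 2 * d₂) * rad_sq z

lemma contDiffAt_rad {n : ℕ∞} {z : Sp} (hz : 0 < rad z) : ContDiffAt ℝ n rad z :=
  ContDiffAt.sqrt (by fun_prop) (Real.sqrt_pos.1 hz).ne'

lemma contDiffAt_radialShift (c : ℝ) {n : ℕ∞} {z : Sp} (hz : 0 < rad z) :
    ContDiffAt ℝ n (radialShift c) z :=
  (contDiffAt_const.add (contDiffAt_const.div (contDiffAt_rad hz) hz.ne')).smul contDiffAt_id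

lemma contDiffAt_coframe (κ : Fin 3 ⊕ Fin 3) {n : ℕ∞} {z : Sp} (hz : 0 < rad z) :
    ContDiffAt ℝ n (coframe κ) z := by
  have coord (i : Fin 3) : ContDiffAt ℝ n (fun z : Sp => z i) z := by fun_prop
  have dot : ContDiffAt ℝ n dotForm z :=
    ContDiffAt.sum fun i _ => (coord i).smul contDiffAt_const
  have sq_rad := (contDiffAt_rad (n := n) hz).pow 2
  have sq_ne_zero : rad z ^ 2 ≠ 0 := (pow_pos hz 2).ne'
  rcases κ with k | k
  · exact ((coord k).div sq_rad sq_ne_zero).smul dot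
  · exact (sq_rad.inv sq_ne_zero).smul
      (((coord _).smul contDiffAt_const).sub ((coord _).smul contDiffAt_const))

lemma exists_coframe_bound :
    ∃ M : ℝ≥0, ∀ κ, ∀ z ∈ unitShell, ‖coframe κ z‖ ≤ M ∧ ‖fderiv ℝ (coframe κ) z‖ ≤ M := by
  have bound (κ : Fin 3 ⊕ Fin 3) :
      ∃ M : ℝ, ∀ z ∈ unitShell, ‖coframe κ z‖ ≤ M ∧ ‖fderiv ℝ (coframe κ) z‖ ≤ M := by
    have smooth (z) (hz : z ∈ unitShell) : ContDiffAt ℝ (1 : ℕ∞) (coframe κ) z :=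
      contDiffAt_coframe κ (rad_pos_of_mem_unitShell hz)
    obtain ⟨M₀, hM₀⟩ := isCompact_unitShell.exists_bound_of_continuousOn
      fun z hz => (smooth z hz).continuousAt.continuousWithinAt
    obtain ⟨M₁, hM₁⟩ := isCompact_unitShell.exists_bound_of_continuousOn (f := fderiv ℝ (coframe κ))
      fun z hz => ((smooth z hz).fderiv_right (m := 0)
        (by norm_num)).continuousAt.continuousWithinAt
    exact ⟨max M₀ M₁, fun z hz =>
      ⟨(hM₀ z hz).trans (le_max_left _ _), (hM₁ z hz).trans (le_max_right _ _)⟩⟩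
  choose M hM using bound
  refine ⟨∑ κ, ‖M κ‖₊, fun κ z hz => ?_⟩
  have M_le : M κ ≤ (∑ κ, ‖M κ‖₊ : ℝ≥0) := (le_abs_self _).trans
    (NNReal.coe_le_coe.2 (single_le_sum (f := fun κ => ‖M κ‖₊) (fun _ _ => zero_le) (mem_univ κ)))
  exact ⟨(hM κ z hz).1.trans M_le, (hM κ z hz).2.trans M_le⟩

lemma contDiff_pd3 {n : ℕ} {w : Sp → ℝ} (hw : ContDiff ℝ (n + 1) w) (k : Fin 3) :
    ContDiff ℝ n (pd3 k w) :=
  (hw.fderiv_right le_rfl).clm_apply contDiff_const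

lemma contDiff_rot3 {n : ℕ} {w : Sp → ℝ} (hw : ContDiff ℝ (n + 1) w) (k : Fin 3) :
    ContDiff ℝ n (Rot3 k w) := by
  have pd (i : Fin 3) := contDiff_pd3 hw i
  rw [funext (rot3_apply k w)]
  fun_prop

lemma contDiff_frameField {n : ℕ} {w : Sp → ℝ} (hw : ContDiff ℝ (n + 1) w) (κ : Fin 3 ⊕ Fin 3) :
    ContDiff ℝ n (frameField κ w) := by
  rcases κ with k | k
  exacts [contDiff_pd3 hw k, contDiff_rot3 hw k]

end RotationFrame

section KlainermanSobolev

open scoped ENNReal NNReal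
open Metric

section

variable {ι E F : Type*} [Fintype ι] [NormedAddCommGroup E] [NormedSpace ℝ E]
  [NormedAddCommGroup F] [NormedSpace ℝ F] {M : ℝ≥0}

lemma norm_sum_smul_le_mul_sum_abs {v : ι → E} (hv : ∀ i, ‖v i‖ ≤ M) (a : ι → ℝ) :
    ‖∑ i, a i • v i‖ ≤ M * ∑ i, |a i| := by
  rw [mul_sum]
  refine norm_sum_le_of_le _ fun i _ => ?_
  rw [norm_smul, Real.norm_eq_abs, mul_comm]
  exact mul_le_mul_of_nonneg_right (hv i) (abs_nonneg _)

lemma norm_sum_smul_add_smulRight_le {ω : ι → E →L[ℝ] ℝ} {v : ι → F} {L : ι → E →L[ℝ] F}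
    (hω : ∀ i, ‖ω i‖ ≤ M) (hv : ∀ i, ‖v i‖ ≤ M) (hL : ∀ i, ‖L i‖ ≤ M) (a : ι → ℝ)
    (b : ι → ι → ℝ) :
    ‖∑ i, (a i • L i + (∑ j, b i j • ω j).smulRight (v i))‖ ≤
      M * ∑ i, |a i| + M * M * ∑ i, ∑ j, |b i j| := by
  have second : ‖∑ i, (∑ j, b i j • ω j).smulRight (v i)‖ ≤ M * M * ∑ i, ∑ j, |b i j| := by
    rw [mul_sum]
    refine norm_sum_le_of_le _ fun i _ => ?_
    rw [ContinuousLinearMap.norm_smulRight_apply, mul_right_comm]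
    exact mul_le_mul (norm_sum_smul_le_mul_sum_abs hω _) (hv i) (norm_nonneg _) (by positivity)
  rw [sum_add_distrib]
  exact (norm_add_le _ _).trans (add_le_add (norm_sum_smul_le_mul_sum_abs hL a) second)

end

/-- The sum of the absolute values at `x` of all derivatives of `w` of order at most two along
`frameField`. -/
def frameJet (w : Sp → ℝ) (x : Sp) : ℝ :=
  |w x| + ∑ κ, |frameField κ w x| + ∑ κ, ∑ l, |frameField l (frameField κ w) x|

lemma abs_le_frameJet (w : Sp → ℝ) (x : Sp) : |w x| ≤ frameJet w x := by
  unfold frameJet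
  linarith [sum_nonneg fun κ (_ : κ ∈ univ) => abs_nonneg (frameField κ w x),
    sum_nonneg fun κ (_ : κ ∈ univ) => sum_nonneg fun l (_ : l ∈ univ) =>
      abs_nonneg (frameField l (frameField κ w) x)]

lemma sum_frameField_le_frameJet (w : Sp → ℝ) (x : Sp) :
    ∑ κ, |frameField κ w x| + ∑ κ, ∑ l, |frameField l (frameField κ w) x| ≤ frameJet w x := by
  unfold frameJet
  linarith [abs_nonneg (w x)]

lemma hasFDerivAt_fderiv_comp_radialShift (c : ℝ) {z : Sp} (hz : 0 < rad z) {w : Sp → ℝ}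
    (hw : ContDiff ℝ 2 w) :
    HasFDerivAt (fderiv ℝ (w ∘ radialShift c))
      (∑ κ, (frameField κ w (radialShift c z) • fderiv ℝ (coframe κ) z +
        (∑ l, frameField l (frameField κ w) (radialShift c z) • coframe l z).smulRight
          (coframe κ z))) z := by
  have fderiv_eq : fderiv ℝ (w ∘ radialShift c) =ᶠ[nhds z]
      fun z => ∑ κ, frameField κ w (radialShift c z) • coframe κ z := by
    filter_upwards [continuous_rad.continuousAt.eventually_const_lt hz] with y hy
    exact (hasFDerivAt_comp_radialShift c hy (hw.differentiable two_ne_zero _)).fderiv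
  refine HasFDerivAt.congr_of_eventuallyEq (HasFDerivAt.fun_sum fun κ _ => ?_) fderiv_eq
  have coefficient := hasFDerivAt_comp_radialShift c hz
    ((contDiff_frameField (n := 1) hw κ).differentiable one_ne_zero _)
  exact coefficient.smul
    ((contDiffAt_coframe κ (n := 1) hz).differentiableAt one_ne_zero).hasFDerivAt

lemma exists_norm_fderiv_comp_radialShift_le :
    ∃ A : ℝ≥0, ∀ c, ∀ w : Sp → ℝ, ContDiff ℝ 2 w → ∀ z ∈ unitShell,
      ‖fderiv ℝ (w ∘ radialShift c) z‖ ≤ A * frameJet w (radialShift c z) ∧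
      ‖fderiv ℝ (fderiv ℝ (w ∘ radialShift c)) z‖ ≤ A * frameJet w (radialShift c z) := by
  obtain ⟨M, hM⟩ := exists_coframe_bound
  refine ⟨M + M * M, fun c w hw z hz => ?_⟩
  have hz₀ := rad_pos_of_mem_unitShell hz
  rw [(hasFDerivAt_comp_radialShift c hz₀ (hw.differentiable two_ne_zero _)).fderiv,
    (hasFDerivAt_fderiv_comp_radialShift c hz₀ hw).fderiv]
  have first := norm_sum_smul_le_mul_sum_abs (fun κ => (hM κ z hz).1)
    fun κ => frameField κ w (radialShift c z)
  have second := norm_sum_smul_add_smulRight_le (fun κ => (hM κ z hz).1)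
    (fun κ => (hM κ z hz).1) (fun κ => (hM κ z hz).2) (fun κ => frameField κ w (radialShift c z))
    fun κ l => frameField l (frameField κ w) (radialShift c z)
  have scaled_jet := mul_le_mul_of_nonneg_left
    (sum_frameField_le_frameJet w (radialShift c z)) (M + M * M).coe_nonneg
  set S₁ := ∑ κ, |frameField κ w (radialShift c z)|
  set S₂ := ∑ κ, ∑ l, |frameField l (frameField κ w) (radialShift c z)|
  have : 0 ≤ M * M * S₁ := by positivity
  have : 0 ≤ M * S₂ := by positivity
  have : 0 ≤ M * M * S₂ := by positivity
  push_cast at scaled_jet ⊢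
  exact ⟨by linarith, by linarith⟩

lemma exists_enorm_le_eLpNorm_frameJet_comp_radialShift :
    ∃ C : ℝ≥0, ∀ c, ∀ w : Sp → ℝ, ContDiff ℝ 2 w → ∀ e, rad e = 1 →
      ‖w (radialShift c e)‖ₑ ≤
        C * eLpNorm (frameJet w ∘ radialShift c) 2 (volume.restrict unitShell) := by
  obtain ⟨A, hA⟩ := exists_norm_fderiv_comp_radialShift_le
  obtain ⟨K, hK⟩ := exists_enorm_le_eLpNorm_fderiv (E := Sp) (F := ℝ) volume
    (by simp) (show (0 : ℝ) < 1 / 4 by norm_num)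
  refine ⟨K * (1 + A + A), fun c w hw e he => ?_⟩
  have ball_subset := closedBall_subset_unitShell he
  have dominated {G : Type} [NormedAddCommGroup G] (g : Sp → G) (a : ℝ≥0)
      (hg : ∀ z ∈ unitShell, ‖g z‖ ≤ a * frameJet w (radialShift c z)) :
      eLpNorm g 2 (volume.restrict (closedBall e (1 / 4))) ≤
        a * eLpNorm (frameJet w ∘ radialShift c) 2 (volume.restrict unitShell) := by
    refine (eLpNorm_mono_measure g (Measure.restrict_mono ball_subset le_rfl)).trans ?_
    refine eLpNorm_le_nnreal_smul_eLpNorm_of_ae_le_mul ?_ 2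
    refine ae_restrict_of_forall_mem isCompact_unitShell.measurableSet fun z hz => ?_
    exact (hg z hz).trans (mul_le_mul_of_nonneg_left (le_abs_self _) a.coe_nonneg)
  have value := dominated (w ∘ radialShift c) 1 fun z _ => by
    simpa using abs_le_frameJet w (radialShift c z)
  have first := dominated (fderiv ℝ (w ∘ radialShift c)) A fun z hz => (hA c w hw z hz).1
  have second := dominated (fderiv ℝ (fderiv ℝ (w ∘ radialShift c))) A
    fun z hz => (hA c w hw z hz).2
  have smooth : ∀ z ∈ closedBall e (1 / 4), ContDiffAt ℝ 2 (w ∘ radialShift c) z :=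
    fun z hz => hw.contDiffAt.comp z
    (contDiffAt_radialShift (n := 2) c (rad_pos_of_mem_unitShell (ball_subset hz)))
  have sobolev := hK e (w ∘ radialShift c) smooth
  refine sobolev.trans ?_
  push_cast at value ⊢
  rw [mul_assoc, add_mul, add_mul]
  exact mul_le_mul_right (add_le_add (add_le_add value first) second) _

lemma exists_rad_mul_enorm_le_eLpNorm_frameJet :
    ∃ C : ℝ≥0, ∀ w : Sp → ℝ, ContDiff ℝ 2 w → ∀ x, 1 ≤ rad x →
      ENNReal.ofReal (rad x) * ‖w x‖ₑ ≤ C * eLpNorm (frameJet w) 2 := by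
  obtain ⟨C, hC⟩ := exists_enorm_le_eLpNorm_frameJet_comp_radialShift
  refine ⟨2 * C, fun w hw x hx => ?_⟩
  have hx₀ : 0 < rad x := one_pos.trans_le hx
  have rad_e : rad ((rad x)⁻¹ • x) = 1 := by
    rw [rad_smul, abs_of_pos (inv_pos.2 hx₀), inv_mul_cancel₀ hx₀.ne']
  have sobolev := hC (rad x - 1) w hw _ rad_e
  rw [radialShift, rad_e, div_one, add_sub_cancel, smul_inv_smul₀ hx₀.ne'] at sobolev
  have change_of_variables :=
    ofReal_mul_eLpNorm_comp_radialShift_le (sub_nonneg.2 hx) (frameJet w)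
  rw [add_sub_cancel] at change_of_variables
  have two_mul_half : ENNReal.ofReal (rad x) = 2 * ENNReal.ofReal (rad x / 2) := by
    rw [← ENNReal.ofReal_ofNat, ← ENNReal.ofReal_mul (by norm_num), mul_div_cancel₀ _ two_ne_zero]
  rw [two_mul_half, ENNReal.coe_mul, ENNReal.coe_ofNat, mul_assoc, mul_assoc]
  refine mul_le_mul_right ((mul_le_mul_right sobolev _).trans ?_) _
  rw [mul_left_comm]
  exact mul_le_mul_right change_of_variables _

end KlainermanSobolev

section MixedNorm

open scoped ENNReal NNReal
open Metric

lemma le_sum_range_sum_range_of_add_le {ι κ : ℕ → Type*} [∀ m, Fintype (ι m)]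
    [∀ n, Fintype (κ n)] (A : ∀ m n, ι m → κ n → ℝ≥0∞) {m n N : ℕ} (h : m + n ≤ N) (a : ι m)
    (b : κ n) :
    A m n a b ≤ ∑ m ∈ range (N + 1), ∑ n ∈ range (N + 1 - m), ∑ a, ∑ b, A m n a b :=
  calc A m n a b
      ≤ ∑ b, A m n a b := single_le_sum_of_canonicallyOrdered (mem_univ b)
    _ ≤ ∑ a, ∑ b, A m n a b :=
        single_le_sum_of_canonicallyOrdered (f := fun a => ∑ b, A m n a b) (mem_univ a)
    _ ≤ ∑ n ∈ range (N + 1 - m), ∑ a, ∑ b, A m n a b :=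
        single_le_sum_of_canonicallyOrdered (f := fun n => ∑ a, ∑ b, A m n a b)
          (mem_range.2 (by omega))
    _ ≤ ∑ m ∈ range (N + 1), ∑ n ∈ range (N + 1 - m), ∑ a, ∑ b, A m n a b :=
        single_le_sum_of_canonicallyOrdered
          (f := fun m => ∑ n ∈ range (N + 1 - m), ∑ a, ∑ b, A m n a b) (mem_range.2 (by omega))

/-- The quantity `∑_{|α|+|β| ≤ 2} ‖Ω^α ∂_x^β w‖_{L²}`, with values in `[0, ∞]`. -/
def mixedSobolevNorm (w : Sp → ℝ) : ℝ≥0∞ :=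
  ∑ m ∈ range 3, ∑ n ∈ range (3 - m), ∑ α : Fin m → Fin 3, ∑ β : Fin n → Fin 3,
    eLpNorm (Rot3Comp α (Pd3Comp β w)) 2

lemma eLpNorm_le_mixedSobolevNorm {m n : ℕ} (h : m + n ≤ 2) (α : Fin m → Fin 3)
    (β : Fin n → Fin 3) (w : Sp → ℝ) :
    eLpNorm (Rot3Comp α (Pd3Comp β w)) 2 ≤ mixedSobolevNorm w := by
  have le_sum := le_sum_range_sum_range_of_add_le
    (fun m n α β => eLpNorm (@Rot3Comp m α (@Pd3Comp n β w)) 2) h α β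
  rw [mixedSobolevNorm]
  exact le_sum

lemma pd3_comm {w : Sp → ℝ} (hw : ContDiff ℝ 2 w) (i j : Fin 3) (x : Sp) :
    pd3 i (pd3 j w) x = pd3 j (pd3 i w) x := by
  have pd3_pd3 (i j : Fin 3) :
      pd3 i (pd3 j w) x = fderiv ℝ (fderiv ℝ w) x (Pi.single i 1) (Pi.single j 1) := by
    have differentiable : DifferentiableAt ℝ (fderiv ℝ w) x :=
      (hw.fderiv_right (m := 1) le_rfl).differentiable one_ne_zero x
    unfold pd3
    rw [fderiv_clm_apply differentiable (by fun_prop)]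
    simp
  rw [pd3_pd3, pd3_pd3]
  exact hw.contDiffAt.isSymmSndFDerivAt (by simp) _ _

/-- Coefficients of the commutator `[∂_l, x_i ∂_j - x_j ∂_i] = δ_{li} ∂_j - δ_{lj} ∂_i`. -/
lemma pd3_rot3 {w : Sp → ℝ} (hw : ContDiff ℝ 2 w) (l k : Fin 3) :
    pd3 l (Rot3 k w) = Rot3 k (pd3 l w) +
      ((Pi.single l 1 : Sp) (rotPair k).1 • pd3 (rotPair k).2 w -
        (Pi.single l 1 : Sp) (rotPair k).2 • pd3 (rotPair k).1 w) := by
  ext x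
  have differentiable (i : Fin 3) : DifferentiableAt ℝ (pd3 i w) x :=
    (contDiff_pd3 (n := 1) hw i).differentiable one_ne_zero x
  have product (i j : Fin 3) : HasFDerivAt (fun x : Sp => x i * pd3 j w x)
      (x i • fderiv ℝ (pd3 j w) x + pd3 j w x • ContinuousLinearMap.proj i) x :=
    (hasFDerivAt_apply i x).mul (differentiable j).hasFDerivAt
  rw [pd3, funext (rot3_apply k w), ((product _ _).fun_sub (product _ _)).fderiv]
  simp only [Pi.add_apply, Pi.sub_apply, Pi.smul_apply, rot3_apply, pd3_comm hw _ l]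
  simp only [pd3, add_apply, sub_apply, smul_apply, smul_eq_mul, ContinuousLinearMap.proj_apply]
  ring

lemma eLpNorm_pd3_rot3_le {w : Sp → ℝ} (hw : ContDiff ℝ 2 w) (l k : Fin 3) :
    eLpNorm (pd3 l (Rot3 k w)) 2 ≤ 3 * mixedSobolevNorm w := by
  have first (i j : Fin 3) :
      eLpNorm ((Pi.single l 1 : Sp) i • pd3 j w) 2 ≤ mixedSobolevNorm w := by
    have pd : eLpNorm (pd3 j w) 2 ≤ mixedSobolevNorm w :=
      eLpNorm_le_mixedSobolevNorm (m := 0) (n := 1) (by norm_num) ![] ![j] w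
    rcases eq_or_ne i l with rfl | h
    · simpa using pd
    · simp [h]
  have measurable (i j : Fin 3) : AEStronglyMeasurable ((Pi.single l 1 : Sp) i • pd3 j w) :=
    ((contDiff_pd3 (n := 1) hw j).continuous.const_smul _).aestronglyMeasurable
  have rot_measurable : AEStronglyMeasurable (Rot3 k (pd3 l w)) :=
    (contDiff_rot3 (n := 0) (contDiff_pd3 (n := 1) hw l) k).continuous.aestronglyMeasurable
  have rot : eLpNorm (Rot3 k (pd3 l w)) 2 ≤ mixedSobolevNorm w :=
    eLpNorm_le_mixedSobolevNorm (m := 1) (n := 1) (by norm_num) ![k] ![l] w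
  rw [pd3_rot3 hw]
  calc _ ≤ mixedSobolevNorm w + (mixedSobolevNorm w + mixedSobolevNorm w) :=
        (eLpNorm_add_le rot_measurable ((measurable _ _).sub (measurable _ _)) one_le_two).trans
          (add_le_add rot ((eLpNorm_sub_le (measurable _ _) (measurable _ _) one_le_two).trans
            (add_le_add (first _ _) (first _ _))))
    _ = 3 * mixedSobolevNorm w := by ring

lemma eLpNorm_frameField_le (κ : Fin 3 ⊕ Fin 3) (w : Sp → ℝ) :
    eLpNorm (frameField κ w) 2 ≤ mixedSobolevNorm w := by
  rcases κ with k | k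
  · exact eLpNorm_le_mixedSobolevNorm (m := 0) (n := 1) (by norm_num) ![] ![k] w
  · exact eLpNorm_le_mixedSobolevNorm (m := 1) (n := 0) (by norm_num) ![k] ![] w

lemma eLpNorm_frameField_frameField_le {w : Sp → ℝ} (hw : ContDiff ℝ 2 w)
    (l κ : Fin 3 ⊕ Fin 3) :
    eLpNorm (frameField l (frameField κ w)) 2 ≤ 3 * mixedSobolevNorm w := by
  have le_three_mul : mixedSobolevNorm w ≤ 3 * mixedSobolevNorm w :=
    le_mul_of_one_le_left' (by norm_num)
  rcases l with l | l <;> rcases κ with k | k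
  · exact (eLpNorm_le_mixedSobolevNorm (m := 0) (n := 2) le_rfl ![] ![l, k] w).trans le_three_mul
  · exact eLpNorm_pd3_rot3_le hw l k
  · exact (eLpNorm_le_mixedSobolevNorm (m := 1) (n := 1) le_rfl ![l] ![k] w).trans le_three_mul
  · exact (eLpNorm_le_mixedSobolevNorm (m := 2) (n := 0) le_rfl ![l, k] ![] w).trans le_three_mul

lemma eLpNorm_sum_le_card_nsmul {ι X : Type*} [MeasurableSpace X] {μ : Measure X} {p : ℝ≥0∞}
    (hp : 1 ≤ p) {s : Finset ι} {f : ι → X → ℝ} {B : ℝ≥0∞}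
    (hf : ∀ i ∈ s, AEStronglyMeasurable (f i) μ) (hB : ∀ i ∈ s, eLpNorm (f i) p μ ≤ B) :
    eLpNorm (∑ i ∈ s, f i) p μ ≤ #s • B :=
  (eLpNorm_sum_le hf hp).trans (sum_le_card_nsmul _ _ _ hB)

lemma eLpNorm_frameJet_le {w : Sp → ℝ} (hw : ContDiff ℝ 2 w) :
    eLpNorm (frameJet w) 2 ≤ 115 * mixedSobolevNorm w := by
  have eLpNorm_abs (f : Sp → ℝ) : eLpNorm |f| 2 = eLpNorm f 2 := eLpNorm_norm f
  have value : eLpNorm |w| 2 ≤ mixedSobolevNorm w := (eLpNorm_abs w).trans_le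
    (eLpNorm_le_mixedSobolevNorm (m := 0) (n := 0) (by norm_num) ![] ![] w)
  have meas₀ : AEStronglyMeasurable |w| := hw.continuous.abs.aestronglyMeasurable
  have meas₁ (κ) : AEStronglyMeasurable |frameField κ w| :=
    (contDiff_frameField (n := 1) hw κ).continuous.abs.aestronglyMeasurable
  have meas₂ (κ l) : AEStronglyMeasurable |frameField l (frameField κ w)| :=
    (contDiff_frameField (n := 0)
      (contDiff_frameField (n := 1) hw κ) l).continuous.abs.aestronglyMeasurable
  have meas_sum₁ : AEStronglyMeasurable (∑ κ, |frameField κ w|) :=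
    aestronglyMeasurable_sum _ fun κ _ => meas₁ κ
  have meas_sum₂ (κ) : AEStronglyMeasurable (∑ l, |frameField l (frameField κ w)|) :=
    aestronglyMeasurable_sum _ fun l _ => meas₂ κ l
  have first : eLpNorm (∑ κ, |frameField κ w|) 2 ≤ 6 • mixedSobolevNorm w :=
    eLpNorm_sum_le_card_nsmul one_le_two (f := fun κ => |frameField κ w|) (fun κ _ => meas₁ κ)
      fun κ _ => (eLpNorm_abs _).trans_le (eLpNorm_frameField_le κ w)
  have second : eLpNorm (∑ κ, ∑ l, |frameField l (frameField κ w)|) 2 ≤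
      6 • 6 • (3 * mixedSobolevNorm w) :=
    eLpNorm_sum_le_card_nsmul one_le_two (f := fun κ => ∑ l, |frameField l (frameField κ w)|)
      (fun κ _ => meas_sum₂ κ) fun κ _ => eLpNorm_sum_le_card_nsmul one_le_two
        (f := fun l => |frameField l (frameField κ w)|) (fun l _ => meas₂ κ l)
        fun l _ => (eLpNorm_abs _).trans_le (eLpNorm_frameField_frameField_le hw l κ)
  have triangle := (eLpNorm_add_le (meas₀.add meas_sum₁)
    (aestronglyMeasurable_sum univ fun κ _ => meas_sum₂ κ) one_le_two).trans
    (add_le_add_left (eLpNorm_add_le meas₀ meas_sum₁ one_le_two) _)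
  have frameJet_eq : frameJet w =
      |w| + ∑ κ, |frameField κ w| + ∑ κ, ∑ l, |frameField l (frameField κ w)| := by
    ext x
    simp [frameJet]
  rw [frameJet_eq]
  refine triangle.trans ((add_le_add (add_le_add value first) second).trans_eq ?_)
  simp only [nsmul_eq_mul]
  push_cast
  ring

end MixedNorm

section WeightedProduct

open scoped ENNReal NNReal
open Metric

lemma enorm_le_eLpNorm_top {X F : Type*} [TopologicalSpace X] [MeasurableSpace X]
    {μ : Measure X} [μ.IsOpenPosMeasure] [NormedAddCommGroup F] {f : X → F}
    (hf : Continuous f) (x : X) : ‖f x‖ₑ ≤ eLpNorm f ∞ μ := by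
  have ae_le : ∀ᵐ y ∂μ, ‖f y‖ₑ ≤ eLpNorm f ∞ μ := by
    simpa using enorm_ae_le_eLpNormEssSup f μ
  have isClosed : IsClosed {y | ‖f y‖ₑ ≤ eLpNorm f ∞ μ} :=
    isClosed_le hf.enorm continuous_const
  exact isClosed.closure_subset (Measure.dense_of_ae ae_le x)

lemma one_le_jb (z : ℝ) : 1 ≤ jb z :=
  Real.one_le_sqrt.2 (le_add_of_nonneg_right (sq_nonneg z))

lemma continuous_jb : Continuous jb := by
  unfold jb
  fun_prop

lemma jb_add_le {t r : ℝ} (hr : 0 ≤ r) : jb (t + r) ≤ jb t + r := by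
  have jb_sq : jb t ^ 2 = 1 + t ^ 2 := Real.sq_sqrt (by positivity)
  have le_jb : t ≤ jb t := (le_abs_self t).trans (Real.abs_le_sqrt (by linarith))
  have jb_pos := one_le_jb t
  exact (Real.sqrt_le_left (by linarith)).2 (by nlinarith)

lemma exists_rad_mul_enorm_le :
    ∃ C : ℝ≥0, ∀ w : Sp → ℝ, ContDiff ℝ 2 w → ∀ x,
      ENNReal.ofReal (rad x) * ‖w x‖ₑ ≤ eLpNorm w ∞ + C * mixedSobolevNorm w := by
  obtain ⟨C, bound⟩ := exists_rad_mul_enorm_le_eLpNorm_frameJet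
  refine ⟨C * 115, fun w hw x => ?_⟩
  rcases le_total (rad x) 1 with h | h
  · have near : ENNReal.ofReal (rad x) * ‖w x‖ₑ ≤ eLpNorm w ∞ :=
      (mul_le_of_le_one_left' (ENNReal.ofReal_le_one.2 h)).trans
        (enorm_le_eLpNorm_top hw.continuous x)
    exact near.trans le_self_add
  · have far := (bound w hw x h).trans (mul_le_mul_right (eLpNorm_frameJet_le hw) _)
    rw [← mul_assoc] at far
    exact far.trans (by simp)

lemma add_mul_le_two_add_mul {j r a A S C : ℝ≥0∞} (hj : 1 ≤ j) (ha : a ≤ A)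
    (hr : r * a ≤ A + C * S) : (j + r) * a ≤ (2 + C) * (j * A + S) :=
  calc (j + r) * a = j * a + r * a := add_mul j r a
    _ ≤ j * A + (j * A + C * S) := by
        gcongr
        exact hr.trans (add_le_add_left (le_mul_of_one_le_left' hj) _)
    _ ≤ j * A + (j * A + C * S) + (C * (j * A) + 2 * S) := le_self_add
    _ = (2 + C) * (j * A + S) := by ring

lemma exists_jb_mul_enorm_le :
    ∃ C : ℝ≥0, ∀ w : Sp → ℝ, ContDiff ℝ 2 w → ∀ (t : ℝ) (x : Sp),
      ‖jb (t + rad x) * w x‖ₑ ≤ C * (ENNReal.ofReal (jb t) * eLpNorm w ∞ + mixedSobolevNorm w) := by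
  obtain ⟨C, bound⟩ := exists_rad_mul_enorm_le
  refine ⟨2 + C, fun w hw t x => ?_⟩
  have one_le : 1 ≤ ENNReal.ofReal (jb t) := ENNReal.one_le_ofReal.2 (one_le_jb t)
  have weight : ‖jb (t + rad x)‖ₑ ≤ ENNReal.ofReal (jb t) + ENNReal.ofReal (rad x) := by
    rw [Real.enorm_of_nonneg (zero_le_one.trans (one_le_jb _)),
      ← ENNReal.ofReal_add (zero_le_one.trans (one_le_jb t)) (rad_nonneg x)]
    exact ENNReal.ofReal_le_ofReal (jb_add_le (rad_nonneg x))
  have sup : ‖w x‖ₑ ≤ eLpNorm w ∞ := enorm_le_eLpNorm_top hw.continuous x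
  have far := bound w hw x
  rw [enorm_mul, ENNReal.coe_add, ENNReal.coe_ofNat]
  exact (mul_le_mul_left weight _).trans (add_mul_le_two_add_mul one_le sup far)

lemma eLpNorm_mul_le_mul_eLpNorm_of_enorm_le {X : Type*} [MeasurableSpace X] {μ : Measure X}
    {p B : ℝ≥0∞} {f g : X → ℝ} (hf : ∀ x, ‖f x‖ₑ ≤ B)
    (hg : AEStronglyMeasurable g μ) : eLpNorm (f * g) p μ ≤ B * eLpNorm g p μ :=
  (eLpNorm_smul_le_eLpNorm_top_mul_eLpNorm p hg f).trans
    (mul_le_mul_left ((eLpNorm_exponent_top (f := f)).trans_le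
      (eLpNormEssSup_le_of_ae_enorm_bound (.of_forall hf))) _)

lemma exists_eLpNorm_jb_mul_mul_le :
    ∃ C : ℝ≥0, ∀ U w : Sp → ℝ, AEStronglyMeasurable U → ContDiff ℝ 2 w → ∀ t : ℝ,
      eLpNorm (fun x => jb (t + rad x) * U x * w x) 2 ≤
        C * (ENNReal.ofReal (jb t) * eLpNorm w ∞ + mixedSobolevNorm w) * eLpNorm U 2 := by
  obtain ⟨C, bound⟩ := exists_jb_mul_enorm_le
  refine ⟨C, fun U w hU hw t => ?_⟩
  have regroup : (fun x => jb (t + rad x) * U x * w x) = (fun x => jb (t + rad x) * w x) * U := by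
    ext x
    simp [mul_right_comm]
  rw [regroup]
  exact eLpNorm_mul_le_mul_eLpNorm_of_enorm_le (bound w hw t) hU

lemma integral_sq_rpow_half_eq_toReal_eLpNorm {X : Type*} [MeasurableSpace X] {μ : Measure X}
    {f : X → ℝ} (hf : AEStronglyMeasurable f μ) :
    (∫ x, f x ^ 2 ∂μ) ^ ((1 : ℝ) / 2) = (eLpNorm f 2 μ).toReal := by
  have := lpNorm_eq_integral_norm_rpow_toReal two_ne_zero ENNReal.ofNat_ne_top hf
  rw [toReal_eLpNorm hf, this]
  simp

lemma contDiff_pd3Comp {m k : ℕ} (β : Fin m → Fin 3) {w : Sp → ℝ}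
    (hw : ContDiff ℝ (k + m : ℕ) w) : ContDiff ℝ k (Pd3Comp β w) := by
  induction m generalizing k with
  | zero => exact hw
  | succ m ih =>
    exact contDiff_pd3 (ih (k := k + 1) _ (by rwa [add_right_comm])) _

lemma contDiff_rot3Comp {m k : ℕ} (α : Fin m → Fin 3) {w : Sp → ℝ}
    (hw : ContDiff ℝ (k + m : ℕ) w) : ContDiff ℝ k (Rot3Comp α w) := by
  induction m generalizing k with
  | zero => exact hw
  | succ m ih =>
    exact contDiff_rot3 (ih (k := k + 1) _ (by rwa [add_right_comm])) _

lemma continuous_rot3Comp_pd3Comp {m n : ℕ} (α : Fin m → Fin 3) (β : Fin n → Fin 3)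
    {w : Sp → ℝ} (hw : ContDiff ℝ (m + n : ℕ) w) : Continuous (Rot3Comp α (Pd3Comp β w)) :=
  (contDiff_rot3Comp (k := 0) α (by simpa using contDiff_pd3Comp (k := m) β hw)).continuous

lemma hasCompactSupport_pd3 {w : Sp → ℝ} (hw : HasCompactSupport w) (k : Fin 3) :
    HasCompactSupport (pd3 k w) :=
  hw.fderiv_apply ℝ _

lemma hasCompactSupport_rot3 {w : Sp → ℝ} (hw : HasCompactSupport w) (k : Fin 3) :
    HasCompactSupport (Rot3 k w) := by
  rw [funext (rot3_apply k w)]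
  exact (hasCompactSupport_pd3 hw _).mul_left.sub (hasCompactSupport_pd3 hw _).mul_left

lemma hasCompactSupport_pd3Comp {m : ℕ} (β : Fin m → Fin 3) {w : Sp → ℝ}
    (hw : HasCompactSupport w) : HasCompactSupport (Pd3Comp β w) := by
  induction m with
  | zero => exact hw
  | succ m ih => exact hasCompactSupport_pd3 (ih _) _

lemma hasCompactSupport_rot3Comp {m : ℕ} (α : Fin m → Fin 3) {w : Sp → ℝ}
    (hw : HasCompactSupport w) : HasCompactSupport (Rot3Comp α w) := by
  induction m with
  | zero => exact hw
  | succ m ih => exact hasCompactSupport_rot3 (ih _) _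

lemma mixedSobolevNorm_ne_top {w : Sp → ℝ} (hw : ContDiff ℝ 2 w) (hw' : HasCompactSupport w) :
    mixedSobolevNorm w ≠ ∞ := by
  unfold mixedSobolevNorm
  simp only [ne_eq, ENNReal.sum_eq_top, not_exists, not_and]
  intro m hm n hn α _ β _
  have hmn : m + n ≤ 2 := by grind
  exact ((continuous_rot3Comp_pd3Comp α β (hw.of_le (mod_cast hmn))).memLp_of_hasCompactSupport
    (hasCompactSupport_rot3Comp α (hasCompactSupport_pd3Comp β hw'))).eLpNorm_ne_top

lemma toReal_sum_eq_sum {ι : Type*} {s : Finset ι} {f : ι → ℝ≥0∞} {g : ι → ℝ}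
    (hf : ∑ i ∈ s, f i ≠ ∞) (h : ∀ i ∈ s, f i ≠ ∞ → (f i).toReal = g i) :
    (∑ i ∈ s, f i).toReal = ∑ i ∈ s, g i := by
  have ne_top := ENNReal.sum_ne_top.1 hf
  rw [ENNReal.toReal_sum ne_top]
  exact sum_congr rfl fun i hi => h i hi (ne_top i hi)

lemma toReal_mixedSobolevNorm {w : Sp → ℝ} (hw : ContDiff ℝ 2 w) (hS : mixedSobolevNorm w ≠ ∞) :
    (mixedSobolevNorm w).toReal = ∑ m ∈ range 3, ∑ n ∈ range (3 - m),
      ∑ α : Fin m → Fin 3, ∑ β : Fin n → Fin 3,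
        (∫ x, Rot3Comp α (Pd3Comp β w) x ^ 2) ^ ((1 : ℝ) / 2) := by
  unfold mixedSobolevNorm at hS ⊢
  refine toReal_sum_eq_sum hS fun m hm hS => toReal_sum_eq_sum hS fun n hn hS =>
    toReal_sum_eq_sum hS fun α _ hS => toReal_sum_eq_sum hS fun β _ _ => ?_
  have order_le : m + n ≤ 2 := by grind
  exact (integral_sq_rpow_half_eq_toReal_eLpNorm (continuous_rot3Comp_pd3Comp α β
    (hw.of_le (mod_cast order_le))).aestronglyMeasurable).symm

lemma contDiff_timeSlice {n : WithTop ℕ∞} {v : Pt → ℝ} (hv : ContDiff ℝ n v) (t : ℝ) :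
    ContDiff ℝ n fun x : Sp => v (Fin.cons t x) := by
  refine hv.comp (contDiff_pi.2 (Fin.cases ?_ fun i => ?_))
  · simpa using contDiff_const
  · simpa using contDiff_apply ℝ ℝ i

lemma hasCompactSupport_timeSlice {v : Pt → ℝ} (hv : HasCompactSupport v) (t : ℝ) :
    HasCompactSupport fun x : Sp => v (Fin.cons t x) := by
  have image_compact : IsCompact ((Fin.tail : Pt → Sp) '' tsupport v) :=
    hv.isCompact.image (continuous_pi fun i => continuous_apply i.succ)
  refine .intro image_compact fun x hx => ?_
  by_contra hne
  exact hx ⟨Fin.cons t x, subset_tsupport _ hne, rfl⟩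

theorem stmt_18_general :
    ∃ C : ℝ, 0 < C ∧ ∀ U w : Sp → ℝ, MemLp U 2 → ContDiff ℝ 2 w → MemLp w ⊤ →
      mixedSobolevNorm w ≠ ∞ → ∀ t : ℝ,
        (∫ x, jb (t + rad x) ^ 2 * U x ^ 2 * w x ^ 2) ^ ((1 : ℝ) / 2) ≤
          C * (∫ x, U x ^ 2) ^ ((1 : ℝ) / 2) * (jb t * (eLpNorm w ⊤).toReal) +
            C * (∫ x, U x ^ 2) ^ ((1 : ℝ) / 2) *
              ∑ m ∈ range 3, ∑ n ∈ range (3 - m), ∑ α : Fin m → Fin 3, ∑ β : Fin n → Fin 3,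
                (∫ x, Rot3Comp α (Pd3Comp β w) x ^ 2) ^ ((1 : ℝ) / 2) := by
  obtain ⟨C, bound⟩ := exists_eLpNorm_jb_mul_mul_le
  refine ⟨C + 1, by positivity, fun U w hU hw hw_top hS t => ?_⟩
  have jb_pos : 0 ≤ jb t := zero_le_one.trans (one_le_jb t)
  have measurable : AEStronglyMeasurable fun x => jb (t + rad x) * U x * w x :=
    ((continuous_jb.comp (continuous_rad.const_add t)).aestronglyMeasurable.mul hU.1).mul
      hw.continuous.aestronglyMeasurable
  have real_bound := ENNReal.toReal_mono
    (by finiteness [hU.eLpNorm_ne_top, hw_top.eLpNorm_ne_top]) (bound U w hU.1 hw t)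
  simp only [← mul_pow]
  rw [integral_sq_rpow_half_eq_toReal_eLpNorm measurable,
    integral_sq_rpow_half_eq_toReal_eLpNorm hU.1, ← toReal_mixedSobolevNorm hw hS]
  rw [ENNReal.toReal_mul, ENNReal.toReal_mul,
    ENNReal.toReal_add (by finiteness [hw_top.eLpNorm_ne_top]) hS, ENNReal.toReal_mul,
    ENNReal.toReal_ofReal jb_pos, ENNReal.coe_toReal] at real_bound
  refine real_bound.trans ?_
  rw [← mul_add, mul_right_comm]
  gcongr
  exact le_add_of_nonneg_right zero_le_one

end WeightedProduct

/-- Lemma 3.5 of the paper.  For `u,v ∈ C₀^∞(ℝ×ℝ³)` and `t ≥ 0`,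
`‖⟨t+r⟩u(t,·)v(t,·)‖₂ ≤ C‖u(t,·)‖₂·⟨t⟩‖v(t,·)‖_∞
  + C‖u(t,·)‖₂·Σ_{|α|+|β|≤2}‖Ω^α∂_x^β v(t,·)‖₂`. -/
theorem stmt_18 :
    ∃ C : ℝ, 0 < C ∧
      ∀ (u v : Pt → ℝ), ContDiff ℝ (⊤ : ℕ∞) u → HasCompactSupport u →
        ContDiff ℝ (⊤ : ℕ∞) v → HasCompactSupport v →
        ∀ t : ℝ, 0 ≤ t →
          (∫ x : Sp, jb (t + rad x) ^ 2 *
              (u (Fin.cons t x)) ^ 2 * (v (Fin.cons t x)) ^ 2) ^ ((1:ℝ)/2)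
            ≤ C * (∫ x : Sp, (u (Fin.cons t x)) ^ 2) ^ ((1:ℝ)/2) * (jb t *
                  (eLpNorm (fun x : Sp => v (Fin.cons t x)) ⊤ volume).toReal)
              + C * (∫ x : Sp, (u (Fin.cons t x)) ^ 2) ^ ((1:ℝ)/2) *
                  ∑ m ∈ Finset.range 3, ∑ n ∈ Finset.range (3 - m),
                    ∑ α : Fin m → Fin 3, ∑ β : Fin n → Fin 3,
                      (∫ x : Sp, (Rot3Comp α (Pd3Comp β
                        (fun y : Sp => v (Fin.cons t y))) x) ^ 2) ^ ((1:ℝ)/2) := by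
  obtain ⟨C, hC, bound⟩ := stmt_18_general
  refine ⟨C, hC, fun u v hu hu' hv hv' t _ => ?_⟩
  have u_smooth := contDiff_timeSlice hu t
  have v_smooth := contDiff_timeSlice hv t
  have u_supp := hasCompactSupport_timeSlice hu' t
  have v_supp := hasCompactSupport_timeSlice hv' t
  have v_C2 := v_smooth.of_le (m := 2) (WithTop.coe_le_coe.2 le_top)
  exact bound _ _ (u_smooth.continuous.memLp_of_hasCompactSupport u_supp) v_C2
    (v_smooth.continuous.memLp_of_hasCompactSupport v_supp)
    (mixedSobolevNorm_ne_top v_C2 v_supp) t
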